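/- arXiv:2109.14849 — 6 statements merged into one kernel-verified Lean document; each statement's English description precedes it below -/
import Mathlib

section
/- Let a, b, t be positive reals and let x, u be reals with u ≥ 0 and u − bt ≤ x ≤ u + at. Then for every Lipschitz function y : [0,t] → ℝ with y(0) = u, y(t) = x, and derivative y'(s) ∈ [−b, a] for almost every s ∈ (0,t), the inequality |γ(s; x,t,u,a,b)| ≤ |y(s)| holds for all s ∈ [0,t]. -/
/-!
The rates of increase of a feasible `y` lie in `[-b, a]`: a Lipschitz function is absolutely
continuous, hence the integral of its derivative, and the a.e. bounds integrate to
`-b (q - p) ≤ y q - y p ≤ a (q - p)` (`increment_bounds`). Applied between `0` and `s` and between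
`s` and `t`, this gives the cone bounds
`u - b s ≤ y s`, `x - a (t - s) ≤ y s` and `y s ≤ x + b (t - s)`.
Every affine piece of `γ` is the boundary of one of these cones (or is zero), and on the
subinterval where it is used it is nonnegative if it bounds `y s` from below and nonpositive if it
bounds `y s` from above. In both cases `|γ s| ≤ |y s|`.
-/

open Set MeasureTheory Matrix
open scoped Classical

noncomputable section

/-- The set Ω₁, as a predicate on `(x, t, u)`, for velocity-bound parameters `a, b`. -/
def inOmega1 (a b x t u : ℝ) : Prop :=
  0 ≤ u ∧ 0 ≤ t ∧
    ((t < u / b ∧ u - b * t ≤ x ∧ x ≤ u + a * t) ∨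
      (u / b ≤ t ∧ a * t - a * u / b ≤ x ∧ x ≤ u + a * t))

/-- The set Ω₂, as a predicate on `(x, t, u)`, for velocity-bound parameters `a, b`. -/
def inOmega2 (a b x t u : ℝ) : Prop :=
  0 ≤ u ∧ 0 ≤ t ∧ u / b ≤ t ∧ 0 ≤ x ∧ x < a * t - a * u / b

/-- The set Ω₃, as a predicate on `(x, t, u)`, for velocity-bound parameters `a, b`. -/
def inOmega3 (a b x t u : ℝ) : Prop :=
  0 ≤ u ∧ 0 ≤ t ∧ u / b ≤ t ∧ u - b * t ≤ x ∧ x < 0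

/-- The value of `V` on Ω₁. -/
def V1fun (a b x t u : ℝ) : ℝ :=
  u ^ 3 / (6 * b) + x ^ 3 / (6 * a) -
    (1 / (6 * a) + 1 / (6 * b)) * ((a * u + b * x - a * b * t) / (a + b)) ^ 3

/-- The value of `V` on Ω₂. -/
def V2fun (a b x t u : ℝ) : ℝ := u ^ 3 / (6 * b) + x ^ 3 / (6 * a)

/-- The value of `V` on Ω₃. -/
def V3fun (a b x t u : ℝ) : ℝ := u ^ 3 / (6 * b) - x ^ 3 / (6 * b)

/-- The extended-real value `V(x,t;u,a,b)` for `u ≥ 0`. -/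
def Vpos (a b x t u : ℝ) : EReal :=
  if inOmega1 a b x t u then (V1fun a b x t u : EReal)
  else if inOmega2 a b x t u then (V2fun a b x t u : EReal)
  else if inOmega3 a b x t u then (V3fun a b x t u : EReal)
  else ⊤

/-- The extended-real value `V(x,t;u,a,b)`; for `u < 0` it is defined by
`V(x,t;u,a,b) := V(-x,t;-u,b,a)`. -/
def Vval (a b x t u : ℝ) : EReal :=
  if 0 ≤ u then Vpos a b x t u else Vpos b a (-x) t (-u)

/-- The trajectory formula on Ω₁. -/
def gamma1 (a b x t u s : ℝ) : ℝ :=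
  if s < (-x + u + a * t) / (a + b) then u - b * s else a * (s - t) + x

/-- The trajectory formula on Ω₂. -/
def gamma2 (a b x t u s : ℝ) : ℝ :=
  if s < u / b then u - b * s else if s < t - x / a then 0 else a * (s - t) + x

/-- The trajectory formula on Ω₃. -/
def gamma3 (a b x t u s : ℝ) : ℝ :=
  if s < u / b then u - b * s else if s < t - |x| / b then 0 else -b * (s - t) + x

/-- The optimal trajectory `γ(s;x,t,u,a,b)` for `u ≥ 0`. -/
def gammaPos (a b x t u s : ℝ) : ℝ :=
  if inOmega1 a b x t u then gamma1 a b x t u s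
  else if inOmega2 a b x t u then gamma2 a b x t u s
  else if inOmega3 a b x t u then gamma3 a b x t u s
  else 0

/-- The optimal trajectory `γ(s;x,t,u,a,b)`; for `u < 0` it is defined by
`γ(s;x,t,u,a,b) := -γ(s;-x,t,-u,b,a)`. -/
def gammaFn (a b x t u s : ℝ) : ℝ :=
  if 0 ≤ u then gammaPos a b x t u s else -gammaPos b a (-x) t (-u) s

/-- One-dimensional feasibility: Lipschitz on `[0,t]` with derivative in `[-b,a]`
almost everywhere on `(0,t)`. -/
def ctrlFeasible (a b t : ℝ) (y : ℝ → ℝ) : Prop :=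
  (∃ K : NNReal, LipschitzOnWith K y (Set.Icc 0 t)) ∧
    ∀ᵐ s ∂(volume : Measure ℝ), s ∈ Set.Ioo 0 t →
      ∃ d ∈ Set.Icc (-b) a, HasDerivAt y d s


/-- A Lipschitz function whose derivative lies in `[-b, a]` almost everywhere has all its
increments over subintervals controlled by the same slopes. -/
lemma increment_bounds {a b t : ℝ} {y : ℝ → ℝ}
    (hlip : ∃ K : NNReal, LipschitzOnWith K y (Set.Icc 0 t))
    (hder : ∀ᵐ s ∂(volume : Measure ℝ), s ∈ Set.Ioo 0 t →
      ∃ d ∈ Set.Icc (-b) a, HasDerivAt y d s)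
    {p q : ℝ} (hp : 0 ≤ p) (hpq : p ≤ q) (hq : q ≤ t) :
    -b * (q - p) ≤ y q - y p ∧ y q - y p ≤ a * (q - p) := by
  obtain ⟨K, hK⟩ := hlip
  have hac : AbsolutelyContinuousOnInterval y p q := by
    refine LipschitzOnWith.absolutelyContinuousOnInterval (hfK := hK.mono ?_)
    rw [uIcc_of_le hpq]
    exact Icc_subset_Icc hp hq
  have hbd : ∀ᵐ s ∂(volume.restrict (Icc p q)), deriv y s ∈ Icc (-b) a := by
    rw [← restrict_Ioo_eq_restrict_Icc, ae_restrict_iff' measurableSet_Ioo]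
    filter_upwards [hder] with s hs hmem
    obtain ⟨d, hd, hyd⟩ := hs ⟨hp.trans_lt hmem.1, hmem.2.trans_le hq⟩
    rwa [hyd.deriv]
  have hint := hac.intervalIntegrable_deriv
  rw [← hac.integral_deriv_eq_sub]
  constructor
  · have h := intervalIntegral.integral_mono_ae_restrict hpq
      (intervalIntegrable_const (c := -b)) hint (hbd.mono fun s hs => hs.1)
    rw [intervalIntegral.integral_const, smul_eq_mul] at h
    linarith
  · have h := intervalIntegral.integral_mono_ae_restrict hpq hint
      (intervalIntegrable_const (c := a)) (hbd.mono fun s hs => hs.2)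
    rw [intervalIntegral.integral_const, smul_eq_mul] at h
    linarith

lemma abs_le_abs_of_nonneg_le {g z : ℝ} (h0 : 0 ≤ g) (h : g ≤ z) : |g| ≤ |z| := by
  rwa [abs_of_nonneg h0, abs_of_nonneg (h0.trans h)]

/-- For positive `a, b, t` and reals `x, u` with `u ≥ 0` and
`u - b*t ≤ x ≤ u + a*t`, every Lipschitz trajectory `y` on `[0,t]` with `y 0 = u`,
`y t = x`, and derivative a.e. in `[-b, a]` on `(0,t)` satisfies
`|γ(s;x,t,u,a,b)| ≤ |y s|` for all `s ∈ [0,t]`. -/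
theorem gamma_abs_le_of_feasible (a b t x u : ℝ) (ha : 0 < a) (hb : 0 < b) (ht : 0 < t)
    (hu : 0 ≤ u) (hx1 : u - b * t ≤ x) (hx2 : x ≤ u + a * t)
    (y : ℝ → ℝ) (hlip : ∃ K : NNReal, LipschitzOnWith K y (Set.Icc 0 t))
    (hy0 : y 0 = u) (hyt : y t = x)
    (hder : ∀ᵐ s ∂(volume : Measure ℝ), s ∈ Set.Ioo 0 t →
      ∃ d ∈ Set.Icc (-b) a, HasDerivAt y d s) :
    ∀ s ∈ Set.Icc 0 t, |gammaFn a b x t u s| ≤ |y s| := by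
  intro s hs
  have hL1 : u - b * s ≤ y s := by
    have := (increment_bounds hlip hder le_rfl hs.1 hs.2).1
    rw [hy0] at this
    linarith
  have hst := increment_bounds hlip hder hs.1 hs.2 le_rfl
  rw [hyt] at hst
  have hL2 : a * (s - t) + x ≤ y s := by linarith [hst.2]
  have hU : y s ≤ -b * (s - t) + x := by linarith [hst.1]
  have h0 : |(0 : ℝ)| ≤ |y s| := by simp
  have hab : 0 < a + b := add_pos ha hb
  simp only [gammaFn, if_pos hu, gammaPos]
  split_ifs with h1 h2 h3
  · -- Membership in Ω₁ says that the two lines of `gamma1` cross at a nonnegative height.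
    have hcross : 0 ≤ a * u + b * x - a * b * t := by
      rcases h1.2.2 with ⟨htu, hx, -⟩ | ⟨-, hx, -⟩
      · rw [lt_div_iff₀ hb] at htu
        nlinarith
      · have : b * (a * t - a * u / b) = a * b * t - a * u := by field_simp
        nlinarith
    unfold gamma1
    split_ifs with hsw
    · refine abs_le_abs_of_nonneg_le ?_ hL1
      rw [lt_div_iff₀ hab] at hsw
      have : 0 ≤ (a + b) * (u - b * s) := by nlinarith
      exact nonneg_of_mul_nonneg_right this hab
    · refine abs_le_abs_of_nonneg_le ?_ hL2
      rw [not_lt, div_le_iff₀ hab] at hsw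
      have : 0 ≤ (a + b) * (a * (s - t) + x) := by nlinarith
      exact nonneg_of_mul_nonneg_right this hab
  · unfold gamma2
    split_ifs with hsu hsx
    · rw [lt_div_iff₀ hb] at hsu
      exact abs_le_abs_of_nonneg_le (by linarith) hL1
    · exact h0
    · have : x / a * a = x := div_mul_cancel₀ x ha.ne'
      exact abs_le_abs_of_nonneg_le (by nlinarith) hL2
  · unfold gamma3
    split_ifs with hsu hsx
    · rw [lt_div_iff₀ hb] at hsu
      exact abs_le_abs_of_nonneg_le (by linarith) hL1
    · exact h0
    · -- Here `x < 0`, and the last piece is a nonpositive upper barrier for `y`.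
      rw [abs_of_neg h3.2.2.2.2] at hsx
      have : -x / b * b = -x := div_mul_cancel₀ (-x) hb.ne'
      have hneg : -b * (s - t) + x ≤ 0 := by nlinarith
      rw [← abs_neg, ← abs_neg (y s)]
      exact abs_le_abs_of_nonneg_le (by linarith) (by linarith)
  · exact h0

end
end

section
/- Let a, b, t be positive reals and let x, u be reals with u − bt ≤ x ≤ u + at. Then the trajectory s ↦ γ(s; x,t,u,a,b) is the unique minimizer of the cost ∫₀ᵗ y(s)²/2 ds over all Lipschitz functions y : [0,t] → ℝ with y(0) = u, y(t) = x, and y'(s) ∈ [−b,a] for almost every s ∈ (0,t); moreover the minimal value equals V(x,t; u,a,b). (Uniqueness means: any feasible trajectory whose cost equals the minimum coincides with γ(·; x,t,u,a,b) on [0,t].) -/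
/-!
Every admissible trajectory `y` satisfies `-b (s - r) ≤ y s - y r ≤ a (s - r)` for
`0 ≤ r ≤ s ≤ t` (fundamental theorem of calculus for Lipschitz functions). Comparing with the two
endpoint values, `y` stays in the band `lowerEnv ≤ y ≤ upperEnv`. The point of the
interval `[lowerEnv s, upperEnv s]` closest to `0` is `nearestTraj s`; it is the strict minimizer
of `z ↦ z ^ 2` on that interval, so `nearestTraj s ^ 2 ≤ y s ^ 2` pointwise, with equality only if
`y s = nearestTraj s`. Both functions being continuous, integration gives minimality together with
uniqueness, with no convexity or optimal control argument.

It remains to see that the piecewise formula `gammaFn` is `nearestTraj` on `[0, t]`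
(`gammaFn_eq_nearestTraj`), that `nearestTraj` is itself admissible (its slopes lie in `[-b, a]`
because this property passes to maxima and minima), and that integrating the affine pieces yields
`Vval` (`integral_nearestTraj_of_nonneg`). The case `u < 0` follows from the reflection
`(x, u, a, b) ↦ (-x, -u, b, a)`.
-/


open Set MeasureTheory Matrix
open scoped Classical

noncomputable section

/-! ### Slope bounds -/

/-- All difference quotients of `f` lie in `[-b, a]`. -/
def SlopeIn (a b : ℝ) (f : ℝ → ℝ) : Prop :=
  ∀ r s, r ≤ s → f r - b * (s - r) ≤ f s ∧ f s ≤ f r + a * (s - r)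

lemma SlopeIn.max {a b : ℝ} {f g : ℝ → ℝ} (hf : SlopeIn a b f) (hg : SlopeIn a b g) :
    SlopeIn a b (fun s => max (f s) (g s)) := by
  intro r s hrs
  have h1 := hf r s hrs
  have h2 := hg r s hrs
  grind

lemma SlopeIn.min {a b : ℝ} {f g : ℝ → ℝ} (hf : SlopeIn a b f) (hg : SlopeIn a b g) :
    SlopeIn a b (fun s => min (f s) (g s)) := by
  intro r s hrs
  have h1 := hf r s hrs
  have h2 := hg r s hrs
  grind

lemma SlopeIn.affine {a b k m : ℝ} (h1 : -b ≤ k) (h2 : k ≤ a) :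
    SlopeIn a b (fun s => k * s + m) := by
  intro r s hrs
  constructor <;> nlinarith

lemma SlopeIn.lipschitzWith {a b : ℝ} (ha : 0 < a) (hb : 0 < b) {f : ℝ → ℝ}
    (hf : SlopeIn a b f) : LipschitzWith (a + b).toNNReal f := by
  refine LipschitzWith.of_le_add_mul' _ fun r s => ?_
  rw [Real.dist_eq]
  rcases le_total r s with h | h
  · have := (hf r s h).1
    rw [abs_of_nonpos (by linarith)]
    nlinarith
  · have := (hf s r h).2
    rw [abs_of_nonneg (by linarith)]
    nlinarith

lemma SlopeIn.deriv_mem {a b d s : ℝ} {f : ℝ → ℝ} (hf : SlopeIn a b f)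
    (hd : HasDerivAt f d s) : d ∈ Icc (-b) a := by
  -- `f s + b s` and `a s - f s` are monotone, so their derivatives are nonnegative
  have m1 : Monotone (fun s => f s + b * s) := fun r s hrs => by
    have := (hf r s hrs).1
    simp only
    linarith
  have m2 : Monotone (fun s => a * s - f s) := fun r s hrs => by
    have := (hf r s hrs).2
    simp only
    linarith
  have d1 : HasDerivAt (fun s => f s + b * s) (d + b * 1) s :=
    hd.add ((hasDerivAt_id s).const_mul b)
  have d2 : HasDerivAt (fun s => a * s - f s) (a * 1 - d) s :=
    ((hasDerivAt_id s).const_mul a).sub hd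
  have e1 := m1.deriv_nonneg (x := s)
  have e2 := m2.deriv_nonneg (x := s)
  rw [d1.deriv] at e1
  rw [d2.deriv] at e2
  constructor <;> linarith

/-- A function agreeing on `[0, t]` with one of slopes in `[-b, a]` is admissible: by
Rademacher's theorem it is differentiable almost everywhere. -/
lemma SlopeIn.ctrlFeasible {a b t : ℝ} (ha : 0 < a) (hb : 0 < b) {f g : ℝ → ℝ}
    (hf : SlopeIn a b f) (hfg : ∀ s ∈ Icc 0 t, g s = f s) : ctrlFeasible a b t g := by
  have hL := hf.lipschitzWith ha hb
  refine ⟨⟨(a + b).toNNReal, fun r hr s hs => ?_⟩, ?_⟩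
  · rw [hfg r hr, hfg s hs]
    exact hL r s
  · filter_upwards [hL.ae_differentiableAt_real] with s hs hst
    refine ⟨deriv f s, hf.deriv_mem hs.hasDerivAt, hs.hasDerivAt.congr_of_eventuallyEq ?_⟩
    filter_upwards [isOpen_Ioo.mem_nhds hst] with r hr
    exact hfg r (Ioo_subset_Icc_self hr)

lemma ctrlFeasible.slope {a b t : ℝ} {y : ℝ → ℝ} (hy : ctrlFeasible a b t y) {r s : ℝ}
    (hr : 0 ≤ r) (hrs : r ≤ s) (hs : s ≤ t) :
    y r - b * (s - r) ≤ y s ∧ y s ≤ y r + a * (s - r) := by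
  obtain ⟨⟨K, hK⟩, hd⟩ := hy
  have hAC : AbsolutelyContinuousOnInterval y r s := by
    refine LipschitzOnWith.absolutelyContinuousOnInterval (K := K) (hK.mono ?_)
    rw [uIcc_of_le hrs]
    exact Icc_subset_Icc hr hs
  have hI := hAC.integral_deriv_eq_sub
  have hint := hAC.intervalIntegrable_deriv
  have hmem : ∀ᵐ v ∂(volume.restrict (Icc r s)), deriv y v ∈ Icc (-b) a := by
    rw [← restrict_Ioo_eq_restrict_Icc, ae_restrict_iff' measurableSet_Ioo]
    filter_upwards [hd] with v hv hvrs
    obtain ⟨d, hd1, hd2⟩ := hv ⟨hr.trans_lt hvrs.1, hvrs.2.trans_le hs⟩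
    rwa [hd2.deriv]
  have l1 : ∫ _ in r..s, (-b) ≤ ∫ v in r..s, deriv y v :=
    intervalIntegral.integral_mono_ae_restrict hrs (by simp) hint
      (hmem.mono fun v hv => hv.1)
  have l2 : ∫ v in r..s, deriv y v ≤ ∫ _ in r..s, a :=
    intervalIntegral.integral_mono_ae_restrict hrs hint (by simp)
      (hmem.mono fun v hv => hv.2)
  rw [hI, intervalIntegral.integral_const, smul_eq_mul] at l1 l2
  constructor <;> linarith

/-! ### The band of reachable values and its point nearest to zero -/

/-- The least value at time `s` compatible with the endpoint values `u`, `x` and with slopes in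
`[-b, a]`. -/
def lowerEnv (a b x t u s : ℝ) : ℝ := max (-b * s + u) (a * s + (x - a * t))

/-- The greatest value at time `s` compatible with the endpoint values `u`, `x` and with slopes
in `[-b, a]`. -/
def upperEnv (a b x t u s : ℝ) : ℝ := min (a * s + u) (-b * s + (x + b * t))

/-- The point of `[lowerEnv, upperEnv]` nearest to `0`. The formula is the projection only where
`lowerEnv ≤ upperEnv`, which holds on `[0, t]`. -/
def nearestTraj (a b x t u s : ℝ) : ℝ := max (lowerEnv a b x t u s) (min 0 (upperEnv a b x t u s))

lemma slopeIn_nearestTraj {a b : ℝ} (ha : 0 < a) (hb : 0 < b) (x t u : ℝ) :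
    SlopeIn a b (nearestTraj a b x t u) := by
  have h0 : SlopeIn a b (fun _ => 0) := by
    simpa using SlopeIn.affine (k := 0) (m := 0) (neg_nonpos.2 hb.le) ha.le
  have hD (m : ℝ) : SlopeIn a b (fun s => -b * s + m) := .affine le_rfl (by linarith)
  have hU (m : ℝ) : SlopeIn a b (fun s => a * s + m) := .affine (by linarith) le_rfl
  exact ((hD _).max (hU _)).max (h0.min ((hU _).min (hD _)))

lemma continuous_nearestTraj (a b x t u : ℝ) : Continuous (nearestTraj a b x t u) := by
  unfold nearestTraj lowerEnv upperEnv
  fun_prop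

lemma lowerEnv_le_upperEnv {a b t x u s : ℝ} (ha : 0 < a) (hb : 0 < b)
    (hx1 : u - b * t ≤ x) (hx2 : x ≤ u + a * t) (hs : s ∈ Icc 0 t) :
    lowerEnv a b x t u s ≤ upperEnv a b x t u s := by
  obtain ⟨h0, h1⟩ := hs
  have e1 := mul_nonneg ha.le h0
  have e2 := mul_nonneg hb.le h0
  have e3 := mul_le_mul_of_nonneg_left h1 ha.le
  have e4 := mul_le_mul_of_nonneg_left h1 hb.le
  refine max_le (le_min ?_ ?_) (le_min ?_ ?_) <;> linarith

lemma ctrlFeasible.mem_band {a b t x u : ℝ} {y : ℝ → ℝ} (hy : ctrlFeasible a b t y)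
    (h0 : y 0 = u) (h1 : y t = x) {s : ℝ} (hs : s ∈ Icc 0 t) :
    lowerEnv a b x t u s ≤ y s ∧ y s ≤ upperEnv a b x t u s := by
  have l := hy.slope le_rfl hs.1 hs.2
  have r := hy.slope hs.1 hs.2 le_rfl
  rw [h0] at l
  rw [h1] at r
  constructor
  · exact max_le (by linarith) (by linarith)
  · exact le_min (by linarith) (by linarith)

/-- The projection of `0` onto `[l, h]` is the unique point of least square there. -/
lemma sq_proj_le {l h z : ℝ} (h1 : l ≤ z) (h2 : z ≤ h) :
    max l (min 0 h) ^ 2 ≤ z ^ 2 ∧ (z ^ 2 = max l (min 0 h) ^ 2 → z = max l (min 0 h)) := by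
  have key : ∀ p : ℝ, (0 ≤ p ∧ p ≤ z) ∨ (p ≤ 0 ∧ z ≤ p) ∨ p = 0 →
      p ^ 2 ≤ z ^ 2 ∧ (z ^ 2 = p ^ 2 → z = p) := by
    rintro p (⟨hp, hz⟩ | ⟨hp, hz⟩ | rfl)
    · exact ⟨by nlinarith, fun e => by nlinarith⟩
    · exact ⟨by nlinarith, fun e => by nlinarith⟩
    · exact ⟨by nlinarith, fun e => by simpa using e⟩
  apply key
  grind

/-! ### The piecewise formula is the nearest point -/

lemma nearestTraj_neg {a b t x u s : ℝ} (ha : 0 < a) (hb : 0 < b)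
    (hx1 : u - b * t ≤ x) (hx2 : x ≤ u + a * t) (hs : s ∈ Icc 0 t) :
    nearestTraj b a (-x) t (-u) s = -nearestTraj a b x t u s := by
  have h := lowerEnv_le_upperEnv ha hb hx1 hx2 hs
  have e1 : lowerEnv b a (-x) t (-u) s = -upperEnv a b x t u s := by
    unfold lowerEnv upperEnv
    rw [← max_neg_neg]
    congr 1 <;> ring
  have e2 : upperEnv b a (-x) t (-u) s = -lowerEnv a b x t u s := by
    unfold lowerEnv upperEnv
    rw [← min_neg_neg]
    congr 1 <;> ring
  unfold nearestTraj
  rw [e1, e2]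
  grind

/-- For `u ≥ 0` the three regions cover all reachable endpoints; each one is recorded with the
inequalities, free of divisions, that place its breakpoints in order. -/
lemma region_cases {a b t x u : ℝ} (ha : 0 < a) (hb : 0 < b) (ht : 0 < t) (hu : 0 ≤ u)
    (hx1 : u - b * t ≤ x) (hx2 : x ≤ u + a * t) :
    (inOmega1 a b x t u ∧ 0 ≤ x ∧ a * b * t ≤ a * u + b * x) ∨
    (¬ inOmega1 a b x t u ∧ inOmega2 a b x t u ∧ 0 ≤ x ∧ u ≤ b * t ∧
      a * u + b * x < a * b * t) ∨
    (¬ inOmega1 a b x t u ∧ ¬ inOmega2 a b x t u ∧ inOmega3 a b x t u ∧ x < 0 ∧ u ≤ b * t) := by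
  have key : a * t - a * u / b ≤ x ↔ a * b * t ≤ a * u + b * x := by
    rw [sub_le_iff_le_add, ← sub_le_iff_le_add', le_div_iff₀ hb]
    constructor <;> intro h <;> nlinarith
  have key2 : u / b ≤ t ↔ u ≤ b * t := by rw [div_le_iff₀ hb, mul_comm]
  unfold inOmega1 inOmega2 inOmega3
  rw [← not_le (a := a * t - a * u / b), ← not_le (a := u / b), key, key2]
  by_cases h1 : u ≤ b * t
  · by_cases h2 : a * b * t ≤ a * u + b * x
    · have hx : 0 ≤ x := by
        by_contra hx
        have := mul_le_mul_of_nonneg_left h1 ha.le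
        have := mul_neg_of_pos_of_neg hb (not_le.1 hx)
        nlinarith
      left
      exact ⟨⟨hu, ht.le, .inr ⟨h1, h2, hx2⟩⟩, hx, h2⟩
    · right
      by_cases hx : 0 ≤ x
      · left
        refine ⟨by tauto, ⟨hu, ht.le, h1, hx, h2⟩, hx, h1, by linarith⟩
      · right
        refine ⟨by tauto, by tauto, ⟨hu, ht.le, h1, hx1, by linarith⟩, by linarith, h1⟩
  · left
    refine ⟨⟨hu, ht.le, .inl ⟨h1, hx1, hx2⟩⟩, by linarith, ?_⟩
    have := mul_le_mul_of_nonneg_left (not_le.1 h1).le ha.le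
    have : 0 ≤ b * x := mul_nonneg hb.le (by linarith)
    nlinarith

/-- Nonnegative endpoints keep the upper envelope nonnegative, so only `lowerEnv` matters. -/
lemma nearestTraj_of_nonneg {a b t x u s : ℝ} (ha : 0 < a) (hb : 0 < b) (hu : 0 ≤ u) (hx : 0 ≤ x)
    (hs : s ∈ Icc 0 t) :
    nearestTraj a b x t u s = max (lowerEnv a b x t u s) 0 := by
  have : 0 ≤ upperEnv a b x t u s := by
    have e1 := mul_nonneg ha.le hs.1
    have e2 := mul_le_mul_of_nonneg_left hs.2 hb.le
    exact le_min (by linarith) (by linarith)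
  rw [nearestTraj, min_eq_left this]

lemma gamma1_eq_nearestTraj {a b t x u s : ℝ} (ha : 0 < a) (hb : 0 < b) (hu : 0 ≤ u) (hx : 0 ≤ x)
    (h : a * b * t ≤ a * u + b * x) (hs : s ∈ Icc 0 t) :
    gamma1 a b x t u s = nearestTraj a b x t u s := by
  rw [nearestTraj_of_nonneg ha hb hu hx hs]
  unfold gamma1 lowerEnv
  have hab : 0 < a + b := by linarith
  split_ifs with hc
  · rw [lt_div_iff₀ hab] at hc
    have : 0 ≤ u - b * s := by
      have := mul_le_mul_of_nonneg_left hc.le hb.le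
      by_contra hn
      nlinarith
    rw [max_eq_left (a := -b * s + u) (by linarith), max_eq_left (by linarith)]
    ring
  · rw [not_lt, div_le_iff₀ hab] at hc
    have : 0 ≤ a * (s - t) + x := by
      have := mul_le_mul_of_nonneg_left hc ha.le
      by_contra hn
      nlinarith
    rw [max_eq_right (a := -b * s + u) (by linarith), max_eq_left (by linarith)]
    ring

lemma gamma2_eq_nearestTraj {a b t x u s : ℝ} (ha : 0 < a) (hb : 0 < b) (hu : 0 ≤ u) (hx : 0 ≤ x)
    (h : a * u + b * x < a * b * t) (hs : s ∈ Icc 0 t) :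
    gamma2 a b x t u s = nearestTraj a b x t u s := by
  rw [nearestTraj_of_nonneg ha hb hu hx hs]
  have hx' : s < t - x / a ↔ a * s + (x - a * t) < 0 := by
    rw [lt_sub_iff_add_lt, ← lt_sub_iff_add_lt', div_lt_iff₀ ha]
    constructor <;> intro h <;> linarith
  have hu' : s < u / b ↔ 0 < -b * s + u := by
    rw [lt_div_iff₀ hb]
    constructor <;> intro h <;> linarith
  unfold gamma2 lowerEnv
  simp only [hx', hu']
  split_ifs with h1 h2
  · have : a * s + (x - a * t) < 0 := by
      by_contra hn
      have := mul_pos ha h1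
      have := mul_nonneg hb.le (not_lt.1 hn)
      nlinarith
    grind
  · grind
  · grind

lemma gamma3_eq_nearestTraj {a b t x u s : ℝ} (ha : 0 < a) (hb : 0 < b) (hu : 0 ≤ u) (hx : x < 0)
    (hx1 : u - b * t ≤ x) (hs : s ∈ Icc 0 t) :
    gamma3 a b x t u s = nearestTraj a b x t u s := by
  have hx' : s < t - |x| / b ↔ 0 < -b * s + (x + b * t) := by
    rw [abs_of_neg hx, lt_sub_iff_add_lt, ← lt_sub_iff_add_lt', div_lt_iff₀ hb]
    constructor <;> intro h <;> linarith
  have hu' : s < u / b ↔ 0 < -b * s + u := by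
    rw [lt_div_iff₀ hb]
    constructor <;> intro h <;> linarith
  have e1 := mul_nonneg ha.le hs.1
  have e2 := mul_le_mul_of_nonneg_left hs.2 ha.le
  have e3 := mul_le_mul_of_nonneg_left hs.2 hb.le
  unfold gamma3 nearestTraj lowerEnv upperEnv
  simp only [hx', hu']
  split_ifs with h1 h2
  · rw [max_eq_left (a := -b * s + u) (by linarith), min_eq_left (le_min _ _), max_eq_left]
      <;> linarith
  · rw [min_eq_left (le_min _ _), max_eq_right (max_le _ _)] <;> linarith
  · rw [min_eq_right (a := a * s + u), min_eq_right, max_eq_right (max_le _ _)] <;> linarith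

lemma gammaPos_eq_nearestTraj {a b t x u : ℝ} (ha : 0 < a) (hb : 0 < b) (ht : 0 < t) (hu : 0 ≤ u)
    (hx1 : u - b * t ≤ x) (hx2 : x ≤ u + a * t) {s : ℝ} (hs : s ∈ Icc 0 t) :
    gammaPos a b x t u s = nearestTraj a b x t u s := by
  unfold gammaPos
  obtain ⟨h1, hx, h⟩ | ⟨h1, h2, hx, h, h'⟩ | ⟨h1, h2, h3, hx, h⟩ :=
    region_cases ha hb ht hu hx1 hx2
  · rw [if_pos h1, gamma1_eq_nearestTraj ha hb hu hx h hs]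
  · rw [if_neg h1, if_pos h2, gamma2_eq_nearestTraj ha hb hu hx h' hs]
  · rw [if_neg h1, if_neg h2, if_pos h3, gamma3_eq_nearestTraj ha hb hu hx hx1 hs]

lemma gammaFn_eq_nearestTraj {a b t x u : ℝ} (ha : 0 < a) (hb : 0 < b) (ht : 0 < t)
    (hx1 : u - b * t ≤ x) (hx2 : x ≤ u + a * t) {s : ℝ} (hs : s ∈ Icc 0 t) :
    gammaFn a b x t u s = nearestTraj a b x t u s := by
  unfold gammaFn
  split_ifs with hu
  · exact gammaPos_eq_nearestTraj ha hb ht hu hx1 hx2 hs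
  · rw [gammaPos_eq_nearestTraj hb ha ht (by linarith) (by linarith) (by linarith) hs,
      nearestTraj_neg ha hb hx1 hx2 hs, neg_neg]

/-! ### The cost -/

lemma integral_affine_sq {p q k m : ℝ} {f : ℝ → ℝ} (hpq : p ≤ q) (hk : k ≠ 0)
    (hf : ∀ s ∈ Ioo p q, f s = k * s + m) :
    ∫ s in p..q, f s ^ 2 / 2 = ((k * q + m) ^ 3 - (k * p + m) ^ 3) / (6 * k) := by
  have h : ∫ s in p..q, f s ^ 2 / 2 = ∫ s in p..q, (k * s + m) ^ 2 / 2 :=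
    intervalIntegral.integral_congr_Ioo_of_le hpq fun s hs => by simp only [hf s hs]
  rw [h, intervalIntegral.integral_comp_mul_add (fun v => v ^ 2 / 2) hk,
    intervalIntegral.integral_div, integral_pow, smul_eq_mul]
  push_cast
  field_simp
  ring

lemma integral_zero_sq {p q : ℝ} {f : ℝ → ℝ} (hpq : p ≤ q) (hf : ∀ s ∈ Ioo p q, f s = 0) :
    ∫ s in p..q, f s ^ 2 / 2 = 0 := by
  have h : ∫ s in p..q, f s ^ 2 / 2 = ∫ s in p..q, (0 : ℝ) :=
    intervalIntegral.integral_congr_Ioo_of_le hpq fun s hs => by simp [hf s hs]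
  simpa using h

lemma integral_nearestTraj_of_nonneg {a b t x u : ℝ} (ha : 0 < a) (hb : 0 < b) (ht : 0 < t)
    (hu : 0 ≤ u) (hx1 : u - b * t ≤ x) (hx2 : x ≤ u + a * t) :
    ((∫ s in (0:ℝ)..t, nearestTraj a b x t u s ^ 2 / 2 : ℝ) : EReal) = Vpos a b x t u := by
  have hint : ∀ p q : ℝ,
      IntervalIntegrable (fun s => nearestTraj a b x t u s ^ 2 / 2) volume p q := fun p q =>
    (((continuous_nearestTraj a b x t u).pow 2).div_const 2).intervalIntegrable p q
  have hab : 0 < a + b := by linarith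
  have hub : 0 ≤ u / b := by positivity
  unfold Vpos
  obtain ⟨h1, hx, h⟩ | ⟨h1, h2, hx, h, h'⟩ | ⟨h1, h2, h3, hx, h⟩ :=
    region_cases ha hb ht hu hx1 hx2
  · rw [if_pos h1, EReal.coe_eq_coe_iff]
    set c := (-x + u + a * t) / (a + b) with hc
    have c0 : 0 ≤ c := div_nonneg (by linarith) hab.le
    have ct : c ≤ t := by
      rw [hc, div_le_iff₀ hab]
      linarith
    rw [← intervalIntegral.integral_add_adjacent_intervals (hint 0 c) (hint c t),
      integral_affine_sq c0 (k := -b) (m := u) (neg_ne_zero.2 hb.ne'),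
      integral_affine_sq ct (k := a) (m := x - a * t) ha.ne']
    · have e1 : -b * c + u = (a * u + b * x - a * b * t) / (a + b) := by
        rw [hc]
        field_simp
        ring
      have e2 : a * c + (x - a * t) = (a * u + b * x - a * b * t) / (a + b) := by
        rw [hc]
        field_simp
        ring
      rw [e1, e2, V1fun]
      field_simp
      ring
    · intro s hs
      rw [← gamma1_eq_nearestTraj ha hb hu hx h ⟨by linarith [hs.1], hs.2.le⟩, gamma1, ← hc,
        if_neg hs.1.le.not_gt]
      ring
    · intro s hs
      rw [← gamma1_eq_nearestTraj ha hb hu hx h ⟨hs.1.le, by linarith [hs.2]⟩, gamma1, ← hc,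
        if_pos hs.2]
      ring
  · rw [if_neg h1, if_pos h2, EReal.coe_eq_coe_iff]
    have c1 : u / b ≤ t - x / a := by
      rw [div_le_iff₀ hb, ← sub_nonneg]
      have : (t - x / a) * b - u = (a * b * t - (a * u + b * x)) / a := by
        field_simp
        ring
      rw [this]
      exact div_nonneg (by linarith) ha.le
    have c2 : t - x / a ≤ t := by
      have : 0 ≤ x / a := by positivity
      linarith
    rw [← intervalIntegral.integral_add_adjacent_intervals (hint 0 (u / b)) (hint (u / b) t),
      ← intervalIntegral.integral_add_adjacent_intervals (hint (u / b) (t - x / a))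
        (hint (t - x / a) t),
      integral_affine_sq hub (k := -b) (m := u) (neg_ne_zero.2 hb.ne'),
      integral_zero_sq c1,
      integral_affine_sq c2 (k := a) (m := x - a * t) ha.ne']
    · rw [V2fun]
      field_simp
      ring
    all_goals
      intro s hs
      rw [← gamma2_eq_nearestTraj ha hb hu hx h' ⟨by linarith [hs.1], by linarith [hs.2]⟩, gamma2]
    · rw [if_neg (by linarith [hs.1]), if_neg hs.1.le.not_gt]
      ring
    · rw [if_neg hs.1.le.not_gt, if_pos hs.2]
    · rw [if_pos hs.2]
      ring
  · rw [if_neg h1, if_neg h2, if_pos h3, EReal.coe_eq_coe_iff]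
    have c1 : u / b ≤ t - |x| / b := by
      rw [abs_of_neg hx, le_sub_iff_add_le, ← add_div, div_le_iff₀ hb]
      linarith
    have c2 : t - |x| / b ≤ t := by
      have : 0 ≤ |x| / b := by positivity
      linarith
    rw [← intervalIntegral.integral_add_adjacent_intervals (hint 0 (u / b)) (hint (u / b) t),
      ← intervalIntegral.integral_add_adjacent_intervals (hint (u / b) (t - |x| / b))
        (hint (t - |x| / b) t),
      integral_affine_sq hub (k := -b) (m := u) (neg_ne_zero.2 hb.ne'),
      integral_zero_sq c1,
      integral_affine_sq c2 (k := -b) (m := x + b * t) (neg_ne_zero.2 hb.ne')]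
    · rw [V3fun, abs_of_neg hx]
      field_simp
      ring
    all_goals
      intro s hs
      rw [← gamma3_eq_nearestTraj ha hb hu hx hx1 ⟨by linarith [hs.1], by linarith [hs.2]⟩, gamma3]
    · rw [if_neg (by linarith [hs.1]), if_neg hs.1.le.not_gt]
      ring
    · rw [if_neg hs.1.le.not_gt, if_pos hs.2]
    · rw [if_pos hs.2]
      ring

lemma integral_nearestTraj {a b t x u : ℝ} (ha : 0 < a) (hb : 0 < b) (ht : 0 < t)
    (hx1 : u - b * t ≤ x) (hx2 : x ≤ u + a * t) :
    ((∫ s in (0:ℝ)..t, nearestTraj a b x t u s ^ 2 / 2 : ℝ) : EReal) = Vval a b x t u := by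
  unfold Vval
  split_ifs with hu
  · exact integral_nearestTraj_of_nonneg ha hb ht hu hx1 hx2
  · rw [← integral_nearestTraj_of_nonneg hb ha ht (by linarith) (by linarith) (by linarith),
      EReal.coe_eq_coe_iff]
    refine intervalIntegral.integral_congr fun s hs => ?_
    rw [uIcc_of_le ht.le] at hs
    simp only [nearestTraj_neg ha hb hx1 hx2 hs, neg_sq]

/-- for positive `a, b, t` and `u - b*t ≤ x ≤ u + a*t`, the trajectory
`s ↦ γ(s;x,t,u,a,b)` is the unique minimizer of `∫₀ᵗ y(s)²/2 ds` over all Lipschitz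
trajectories `y` on `[0,t]` with `y 0 = u`, `y t = x` and a.e. derivative in `[-b,a]`
on `(0,t)`; the minimal value equals `V(x,t;u,a,b)`. -/
theorem gamma_is_unique_minimizer (a b t x u : ℝ) (ha : 0 < a) (hb : 0 < b) (ht : 0 < t)
    (hx1 : u - b * t ≤ x) (hx2 : x ≤ u + a * t) :
    -- γ is itself a feasible trajectory with the right endpoints
    (ctrlFeasible a b t (gammaFn a b x t u) ∧
      gammaFn a b x t u 0 = u ∧ gammaFn a b x t u t = x) ∧
    -- its cost equals V(x,t;u,a,b)
    (((∫ s in (0:ℝ)..t, (gammaFn a b x t u s) ^ 2 / 2 : ℝ) : EReal) = Vval a b x t u) ∧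
    -- it minimizes the cost among all feasible trajectories
    (∀ y : ℝ → ℝ, ctrlFeasible a b t y → y 0 = u → y t = x →
      (∫ s in (0:ℝ)..t, (gammaFn a b x t u s) ^ 2 / 2) ≤ ∫ s in (0:ℝ)..t, (y s) ^ 2 / 2) ∧
    -- uniqueness: any feasible trajectory attaining the minimal cost agrees with γ on [0,t]
    (∀ y : ℝ → ℝ, ctrlFeasible a b t y → y 0 = u → y t = x →
      (∫ s in (0:ℝ)..t, (y s) ^ 2 / 2) = (∫ s in (0:ℝ)..t, (gammaFn a b x t u s) ^ 2 / 2) →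
      ∀ s ∈ Set.Icc 0 t, y s = gammaFn a b x t u s) := by
  have hγ : ∀ s ∈ Icc 0 t, gammaFn a b x t u s = nearestTraj a b x t u s :=
    fun s hs => gammaFn_eq_nearestTraj ha hb ht hx1 hx2 hs
  have hcost : (∫ s in (0:ℝ)..t, (gammaFn a b x t u s) ^ 2 / 2) =
      ∫ s in (0:ℝ)..t, nearestTraj a b x t u s ^ 2 / 2 := by
    refine intervalIntegral.integral_congr fun s hs => ?_
    rw [uIcc_of_le ht.le] at hs
    simp only [hγ s hs]
  have hcont : ContinuousOn (fun s => nearestTraj a b x t u s ^ 2 / 2) (Icc 0 t) :=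
    (((continuous_nearestTraj a b x t u).pow 2).div_const 2).continuousOn
  have hycont : ∀ y : ℝ → ℝ, ctrlFeasible a b t y →
      ContinuousOn (fun s => y s ^ 2 / 2) (Icc 0 t) := by
    rintro y ⟨⟨K, hK⟩, -⟩
    exact (hK.continuousOn.pow 2).div_const 2
  have hpt : ∀ y : ℝ → ℝ, ctrlFeasible a b t y → y 0 = u → y t = x → ∀ s ∈ Icc 0 t,
      nearestTraj a b x t u s ^ 2 ≤ y s ^ 2 ∧
        (y s ^ 2 = nearestTraj a b x t u s ^ 2 → y s = nearestTraj a b x t u s) := by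
    intro y hy h0 h1 s hs
    have := hy.mem_band h0 h1 hs
    exact sq_proj_le this.1 this.2
  -- the band degenerates to a single point at both ends of `[0, t]`
  have hend0 : nearestTraj a b x t u 0 = u := by
    have l1 : lowerEnv a b x t u 0 = u := by
      rw [lowerEnv, max_eq_left] <;> linarith
    have l2 : upperEnv a b x t u 0 = u := by
      rw [upperEnv, min_eq_left] <;> linarith
    rw [nearestTraj, l1, l2, max_eq_left (min_le_right _ _)]
  have hendt : nearestTraj a b x t u t = x := by
    have l1 : lowerEnv a b x t u t = x := by
      rw [lowerEnv, max_eq_right] <;> linarith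
    have l2 : upperEnv a b x t u t = x := by
      rw [upperEnv, min_eq_right] <;> linarith
    rw [nearestTraj, l1, l2, max_eq_left (min_le_right _ _)]
  refine ⟨⟨(slopeIn_nearestTraj ha hb x t u).ctrlFeasible ha hb hγ, ?_, ?_⟩, ?_, ?_, ?_⟩
  · rw [hγ 0 ⟨le_rfl, ht.le⟩, hend0]
  · rw [hγ t ⟨ht.le, le_rfl⟩, hendt]
  · rw [hcost, integral_nearestTraj ha hb ht hx1 hx2]
  · intro y hy h0 h1
    rw [hcost]
    refine intervalIntegral.integral_mono_on ht.le
      (hcont.intervalIntegrable_of_Icc ht.le)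
      ((hycont y hy).intervalIntegrable_of_Icc ht.le) fun s hs => ?_
    have := (hpt y hy h0 h1 s hs).1
    linarith
  · intro y hy h0 h1 heq s hs
    rw [hγ s hs]
    by_contra hne
    have hs1 := hpt y hy h0 h1 s hs
    have hlt : nearestTraj a b x t u s ^ 2 < y s ^ 2 :=
      lt_of_le_of_ne hs1.1 fun e => hne (hs1.2 e.symm)
    -- strict inequality at one point of continuity makes the costs differ
    have := intervalIntegral.integral_lt_integral_of_continuousOn_of_le_of_exists_lt ht hcont
      (hycont y hy)
      (fun r hr => by
        have := (hpt y hy h0 h1 r (Ioc_subset_Icc_self hr)).1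
        linarith)
      ⟨s, hs, by linarith⟩
    rw [heq, hcost] at this
    exact lt_irrefl _ this

end
end

section
/- Let a, b, t be positive reals and let x, u be reals with u − bt ≤ x ≤ u + at. Then ∫₀ᵗ (1/2)·γ(s; x,t,u,a,b)² ds = V(x,t; u,a,b). -/
/-!
The trajectory `γ` is piecewise affine with at most three arcs, so its cost is a sum of integrals
of squares of affine functions, each of which has a cubic antiderivative (`affine_arc`). The
constraints `u - b t ≤ x ≤ u + a t` do two things: they put the switching times of `γ` in order
inside `[0, t]`, and, for `u ≥ 0`, they force `(x, t, u)` into one of the three regions, so that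
the value `⊤` never occurs (`integral_gammaPos`). On each region the claim is then an identity of
rational functions. The case `u < 0` reduces to `u > 0` by the reflection
`(x, u, a, b) ↦ (-x, -u, b, a)`, since the cost is even in `γ`.
-/

open Set MeasureTheory Matrix
open scoped Classical

noncomputable section

/-- The cost of one affine arc. The formula for the arc is required only on the half-open interval,
since the arcs of `γ` are cut at their right endpoints. -/
lemma affine_arc (f : ℝ → ℝ) (m k p q : ℝ) (hpq : p ≤ q)
    (h : ∀ s, p ≤ s → s < q → f s = m * s + k) :
    IntervalIntegrable (fun s => (1 / 2) * f s ^ 2) volume p q ∧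
      ∫ s in p..q, (1 / 2) * f s ^ 2 =
        m ^ 2 * (q ^ 3 - p ^ 3) / 6 + m * k * (q ^ 2 - p ^ 2) / 2 + k ^ 2 * (q - p) / 2 := by
  have hI : IntervalIntegrable (fun s : ℝ => (1 / 2) * (m * s + k) ^ 2) volume p q :=
    Continuous.intervalIntegrable (by fun_prop) _ _
  have hcongr : EqOn (fun s : ℝ => (1 / 2) * (m * s + k) ^ 2) (fun s => (1 / 2) * f s ^ 2)
      (uIoo p q) := by
    intro s hs
    rw [uIoo_of_le hpq] at hs
    simp only [h s hs.1.le hs.2]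
  refine ⟨hI.congr_uIoo hcongr, ?_⟩
  rw [← intervalIntegral.integral_congr_uIoo hcongr]
  have hd : ∀ s ∈ uIcc p q, HasDerivAt
      (fun s : ℝ => m ^ 2 * s ^ 3 / 6 + m * k * s ^ 2 / 2 + k ^ 2 * s / 2)
      ((1 / 2) * (m * s + k) ^ 2) s := by
    intro s _
    have h3 := ((hasDerivAt_pow 3 s).const_mul (m ^ 2)).div_const 6
    have h2 := ((hasDerivAt_pow 2 s).const_mul (m * k)).div_const 2
    have h1 := ((hasDerivAt_id s).const_mul (k ^ 2)).div_const 2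
    refine ((h3.add h2).add h1).congr_deriv ?_
    norm_num
    ring
  rw [intervalIntegral.integral_eq_sub_of_hasDerivAt hd hI]
  ring

lemma integral_gamma1 (a b t x u : ℝ) (ha : 0 < a) (hb : 0 < b)
    (hx1 : u - b * t ≤ x) (hx2 : x ≤ u + a * t) :
    ∫ s in (0:ℝ)..t, (1 / 2) * gamma1 a b x t u s ^ 2 = V1fun a b x t u := by
  have hab : 0 < a + b := add_pos ha hb
  set c := (-x + u + a * t) / (a + b) with hc
  have hc0 : 0 ≤ c := div_nonneg (by linarith) hab.le
  have hct : c ≤ t := by rw [hc, div_le_iff₀ hab]; linarith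
  obtain ⟨i1, e1⟩ := affine_arc (gamma1 a b x t u) (-b) u 0 c hc0 (by
    intro s _ hs
    rw [gamma1, if_pos hs]; ring)
  obtain ⟨i2, e2⟩ := affine_arc (gamma1 a b x t u) a (x - a * t) c t hct (by
    intro s hs _
    rw [gamma1, if_neg (not_lt.mpr hs)]; ring)
  rw [← intervalIntegral.integral_add_adjacent_intervals i1 i2, e1, e2, V1fun, hc]
  field_simp
  ring

lemma integral_gamma2 (a b t x u : ℝ) (ha : 0 < a) (hb : 0 < b) (hu : 0 ≤ u)
    (hx1 : 0 ≤ x) (hx2 : x < a * t - a * u / b) :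
    ∫ s in (0:ℝ)..t, (1 / 2) * gamma2 a b x t u s ^ 2 = V2fun a b x t u := by
  have hc0 : 0 ≤ u / b := by positivity
  have hcd : u / b ≤ t - x / a := by
    have hxa : x / a < t - u / b := by
      rw [div_lt_iff₀ ha]
      calc x < a * t - a * u / b := hx2
        _ = (t - u / b) * a := by ring
    linarith
  have hdt : t - x / a ≤ t := by linarith [div_nonneg hx1 ha.le]
  obtain ⟨i1, e1⟩ := affine_arc (gamma2 a b x t u) (-b) u 0 (u / b) hc0 (by
    intro s _ hs
    rw [gamma2, if_pos hs]; ring)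
  obtain ⟨i2, e2⟩ := affine_arc (gamma2 a b x t u) 0 0 (u / b) (t - x / a) hcd (by
    intro s hs hs'
    rw [gamma2, if_neg (not_lt.mpr hs), if_pos hs']; ring)
  obtain ⟨i3, e3⟩ := affine_arc (gamma2 a b x t u) a (x - a * t) (t - x / a) t hdt (by
    intro s hs _
    rw [gamma2, if_neg (not_lt.mpr (hcd.trans hs)), if_neg (not_lt.mpr hs)]; ring)
  rw [← intervalIntegral.integral_add_adjacent_intervals (i1.trans i2) i3,
    ← intervalIntegral.integral_add_adjacent_intervals i1 i2, e1, e2, e3, V2fun]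
  field_simp
  ring

lemma integral_gamma3 (a b t x u : ℝ) (hb : 0 < b) (hu : 0 ≤ u)
    (hx1 : u - b * t ≤ x) (hx2 : x < 0) :
    ∫ s in (0:ℝ)..t, (1 / 2) * gamma3 a b x t u s ^ 2 = V3fun a b x t u := by
  have hc0 : 0 ≤ u / b := by positivity
  have habs : |x| = -x := abs_of_neg hx2
  have hcd : u / b ≤ t - -x / b := by
    have : (u - x) / b ≤ t := by rw [div_le_iff₀ hb]; linarith
    have e : (u - x) / b = u / b + -x / b := by ring
    linarith
  have hdt : t - -x / b ≤ t := by linarith [div_nonneg (neg_nonneg.mpr hx2.le) hb.le]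
  obtain ⟨i1, e1⟩ := affine_arc (gamma3 a b x t u) (-b) u 0 (u / b) hc0 (by
    intro s _ hs
    rw [gamma3, if_pos hs]; ring)
  obtain ⟨i2, e2⟩ := affine_arc (gamma3 a b x t u) 0 0 (u / b) (t - -x / b) hcd (by
    intro s hs hs'
    rw [gamma3, habs, if_neg (not_lt.mpr hs), if_pos hs']; ring)
  obtain ⟨i3, e3⟩ := affine_arc (gamma3 a b x t u) (-b) (x + b * t) (t - -x / b) t hdt (by
    intro s hs _
    rw [gamma3, habs, if_neg (not_lt.mpr (hcd.trans hs)), if_neg (not_lt.mpr hs)]; ring)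
  rw [← intervalIntegral.integral_add_adjacent_intervals (i1.trans i2) i3,
    ← intervalIntegral.integral_add_adjacent_intervals i1 i2, e1, e2, e3, V3fun]
  field_simp
  ring

lemma integral_gammaPos (a b t x u : ℝ) (ha : 0 < a) (hb : 0 < b) (ht : 0 < t) (hu : 0 ≤ u)
    (hx1 : u - b * t ≤ x) (hx2 : x ≤ u + a * t) :
    ((∫ s in (0:ℝ)..t, (1 / 2) * gammaPos a b x t u s ^ 2 : ℝ) : EReal) = Vpos a b x t u := by
  by_cases h1 : inOmega1 a b x t u
  · simp only [gammaPos, Vpos, if_pos h1]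
    rw [integral_gamma1 a b t x u ha hb hx1 hx2]
  by_cases h2 : inOmega2 a b x t u
  · simp only [gammaPos, Vpos, if_neg h1, if_pos h2]
    rw [integral_gamma2 a b t x u ha hb hu h2.2.2.2.1 h2.2.2.2.2]
  -- Under the constraints on `x`, the three regions exhaust `u ≥ 0`.
  have h3 : inOmega3 a b x t u := by
    have htu : u / b ≤ t := by
      by_contra hlt
      exact h1 ⟨hu, ht.le, Or.inl ⟨not_le.mp hlt, hx1, hx2⟩⟩
    have hlt : x < a * t - a * u / b := by
      by_contra hge
      exact h1 ⟨hu, ht.le, Or.inr ⟨htu, not_lt.mp hge, hx2⟩⟩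
    refine ⟨hu, ht.le, htu, hx1, ?_⟩
    by_contra hge
    exact h2 ⟨hu, ht.le, htu, not_lt.mp hge, hlt⟩
  simp only [gammaPos, Vpos, if_neg h1, if_neg h2, if_pos h3]
  rw [integral_gamma3 a b t x u hb hu hx1 h3.2.2.2.2]

/-- for positive `a, b, t` and `u - b*t ≤ x ≤ u + a*t`, the cost of the
trajectory `γ(·;x,t,u,a,b)` equals `V(x,t;u,a,b)`. -/
theorem integral_gamma_sq_eq_Vval (a b t x u : ℝ) (ha : 0 < a) (hb : 0 < b) (ht : 0 < t)
    (hx1 : u - b * t ≤ x) (hx2 : x ≤ u + a * t) :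
    ((∫ s in (0:ℝ)..t, (1 / 2) * (gammaFn a b x t u s) ^ 2 : ℝ) : EReal)
      = Vval a b x t u := by
  by_cases hu : 0 ≤ u
  · simp only [gammaFn, Vval, if_pos hu]
    exact integral_gammaPos a b t x u ha hb ht hu hx1 hx2
  · simp only [gammaFn, Vval, if_neg hu, neg_sq]
    exact integral_gammaPos b a t (-x) (-u) hb ha ht (by linarith) (by linarith) (by linarith)

end
end

section
/- Let a, b be positive reals, x a real, and t > 0. Then the function u ↦ V(x,t; u,a,b) is strictly convex and twice continuously differentiable on the interval [x − at, x + bt]. -/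
/-!
On the interval `[x - a t, x + b t]` the piecewise definition of `V` collapses to one formula.
Writing `p = max · 0`, `c = 1/(6a) + 1/(6b)` and
`w = (a u + b x - a b t)/(a + b)`, `w' = (-b u - a x - a b t)/(a + b)`, one has
`V = p(u)³/(6b) + p(-u)³/(6a) + const - c p(w)³ - c p(w')³` (`Vval_toReal_eq`).

Since `p³` is `C²`, so is `V`.  For convexity, the derivative in `u` is
`(p(u)² - p(w)²)/(2b) - (p(-u)² - p(w')²)/(2a)`.  On the interval `w ≤ u`, and `w` has slope
`a/(a+b) < 1` in `u`; hence `p(u)² - p(w)²` is nondecreasing, and strictly so between two points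
the larger of which is positive (`posPart_sq_sub_mono`).  The reflection
`(a, b, x, u) ↦ (b, a, -x, -u)` gives the same for the other bracket, and of two points `u < v`
either `v > 0` or `u < 0`.  So `V'` is strictly increasing.
-/

open Set MeasureTheory Matrix
open scoped Classical

noncomputable section

lemma hasDerivAt_max_zero_pow (n : ℕ) (y : ℝ) :
    HasDerivAt (fun z : ℝ => max z 0 ^ (n + 2)) ((n + 2) * max y 0 ^ (n + 1)) y := by
  rcases lt_trichotomy y 0 with h | h | h
  · have e : (fun z : ℝ => max z 0 ^ (n + 2)) =ᶠ[nhds y] fun _ => 0 := by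
      filter_upwards [gt_mem_nhds h] with z hz
      simp [max_eq_right hz.le]
    simpa [max_eq_right h.le] using (hasDerivAt_const y (0 : ℝ)).congr_of_eventuallyEq e
  · subst h
    have e : (fun z : ℝ => max z 0 ^ (n + 2)) =O[nhds 0] fun z => ‖z - 0‖ ^ (n + 2) := by
      refine Asymptotics.IsBigO.of_bound 1 (Filter.Eventually.of_forall fun z => ?_)
      simp only [norm_pow, sub_zero, norm_norm, one_mul]
      gcongr
      rw [Real.norm_eq_abs, Real.norm_eq_abs, abs_of_nonneg (le_max_right _ _)]
      exact max_le (le_abs_self z) (abs_nonneg z)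
    simpa using (e.hasFDerivAt (by omega)).hasDerivAt
  · have e : (fun z : ℝ => max z 0 ^ (n + 2)) =ᶠ[nhds y] fun z => z ^ (n + 2) := by
      filter_upwards [lt_mem_nhds h] with z hz
      rw [max_eq_left hz.le]
    rw [max_eq_left h.le]
    simpa using (hasDerivAt_pow (n + 2) y).congr_of_eventuallyEq e

lemma contDiff_max_zero_cube : ContDiff ℝ 2 (fun z : ℝ => max z 0 ^ 3) := by
  have d3 : deriv (fun z : ℝ => max z 0 ^ 3) = fun z => 3 * max z 0 ^ 2 := by
    funext z
    rw [(hasDerivAt_max_zero_pow 1 z).deriv]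
    norm_num
  have h2 (z : ℝ) : HasDerivAt (fun z : ℝ => max z 0 ^ 2) (2 * max z 0) z := by
    simpa using hasDerivAt_max_zero_pow 0 z
  have d2 : deriv (fun z : ℝ => max z 0 ^ 2) = fun z => 2 * max z 0 :=
    funext fun z => (h2 z).deriv
  have c1 : ContDiff ℝ 1 (fun z : ℝ => max z 0 ^ 2) := by
    rw [contDiff_one_iff_deriv, d2]
    exact ⟨fun z => (h2 z).differentiableAt, by fun_prop⟩
  rw [show (2 : WithTop ℕ∞) = 1 + 1 by norm_num, contDiff_succ_iff_deriv, d3]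
  exact ⟨fun z => (hasDerivAt_max_zero_pow 1 z).differentiableAt, by simp,
    contDiff_const.mul c1⟩

/-- The argument of the cubic correction term of `V` on Ω₁. -/
def corr (a b x t u : ℝ) : ℝ := (a * u + b * x - a * b * t) / (a + b)

/-- The single formula for `V` as a function of `u ∈ [x - a t, x + b t]`, with no case
distinction on signs. -/
def Vglue (a b x t u : ℝ) : ℝ :=
  max u 0 ^ 3 / (6 * b) + max (-u) 0 ^ 3 / (6 * a) +
    (max x 0 ^ 3 / (6 * a) + max (-x) 0 ^ 3 / (6 * b)) -
    (1 / (6 * a) + 1 / (6 * b)) * max (corr a b x t u) 0 ^ 3 -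
    (1 / (6 * a) + 1 / (6 * b)) * max (corr b a (-x) t (-u)) 0 ^ 3

/-- The derivative of `Vglue` in `u`. -/
def VglueDeriv (a b x t u : ℝ) : ℝ :=
  (max u 0 ^ 2 - max (corr a b x t u) 0 ^ 2) / (2 * b) -
    (max (-u) 0 ^ 2 - max (corr b a (-x) t (-u)) 0 ^ 2) / (2 * a)

lemma Vglue_symm (a b x t u : ℝ) : Vglue b a (-x) t (-u) = Vglue a b x t u := by
  simp only [Vglue, neg_neg]
  ring

lemma Vpos_toReal_eq {a b x t u : ℝ} (ha : 0 < a) (hb : 0 < b) (ht : 0 < t) (hu : 0 ≤ u)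
    (h1 : x - a * t ≤ u) (h2 : u ≤ x + b * t) :
    (Vpos a b x t u).toReal = Vglue a b x t u := by
  have hab : 0 < a + b := by positivity
  have hw' : max (corr b a (-x) t (-u)) 0 = 0 := by
    refine max_eq_right (div_nonpos_of_nonpos_of_nonneg ?_ (by positivity))
    nlinarith [mul_le_mul_of_nonneg_left h2 ha.le, mul_nonneg hab.le hu]
  have hn : max (-u) 0 = 0 := max_eq_right (by linarith)
  have hdiv : a * u / b * b = a * u := by field_simp
  have key : a * t - a * u / b ≤ x ↔ 0 ≤ a * u + b * x - a * b * t := by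
    rw [← mul_le_mul_iff_left₀ hb, sub_mul, hdiv]
    constructor <;> intro h <;> nlinarith
  by_cases hΩ : inOmega1 a b x t u
  · have hw : 0 ≤ x ∧ 0 ≤ corr a b x t u := by
      rcases hΩ with ⟨-, -, ⟨h, -, -⟩ | ⟨h, h', -⟩⟩
      · rw [lt_div_iff₀ hb] at h
        have hx : 0 ≤ x := by nlinarith
        have hnum : 0 ≤ a * u + b * x - a * b * t := by
          nlinarith [mul_lt_mul_of_pos_left h ha, mul_nonneg hb.le hx]
        exact ⟨hx, div_nonneg hnum hab.le⟩
      · rw [key] at h'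
        rw [div_le_iff₀ hb] at h
        refine ⟨?_, div_nonneg h' hab.le⟩
        have : 0 ≤ b * x := by nlinarith [mul_le_mul_of_nonneg_left h ha.le]
        exact nonneg_of_mul_nonneg_right this hb
    rw [Vpos, if_pos hΩ, EReal.toReal_coe]
    simp only [Vglue, V1fun, hw', hn, max_eq_left hu, max_eq_left hw.1, max_eq_left hw.2,
      max_eq_right (neg_nonpos.2 hw.1)]
    unfold corr
    ring
  · have hub : u / b ≤ t := by
      by_contra! h
      exact hΩ ⟨hu, ht.le, Or.inl ⟨h, by linarith, by linarith⟩⟩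
    have hlt : x < a * t - a * u / b := by
      by_contra! h
      exact hΩ ⟨hu, ht.le, Or.inr ⟨hub, h, by linarith⟩⟩
    have hw : max (corr a b x t u) 0 = 0 := by
      refine max_eq_right (div_nonpos_of_nonpos_of_nonneg ?_ hab.le)
      by_contra! h
      exact absurd (key.2 h.le) (not_le.2 hlt)
    by_cases hx : 0 ≤ x
    · have hΩ2 : inOmega2 a b x t u := ⟨hu, ht.le, hub, hx, hlt⟩
      rw [Vpos, if_neg hΩ, if_pos hΩ2, EReal.toReal_coe]
      simp only [Vglue, V2fun, hw', hn, hw, max_eq_left hu, max_eq_left hx,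
        max_eq_right (neg_nonpos.2 hx)]
      ring
    · have hΩ2 : ¬ inOmega2 a b x t u := fun h => hx h.2.2.2.1
      push Not at hx
      have hΩ3 : inOmega3 a b x t u := ⟨hu, ht.le, hub, by linarith, hx⟩
      rw [Vpos, if_neg hΩ, if_neg hΩ2, if_pos hΩ3, EReal.toReal_coe]
      simp only [Vglue, V3fun, hw', hn, hw, max_eq_left hu, max_eq_right hx.le,
        max_eq_left (neg_nonneg.2 hx.le)]
      ring

lemma Vval_toReal_eq {a b x t u : ℝ} (ha : 0 < a) (hb : 0 < b) (ht : 0 < t)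
    (hu : u ∈ Icc (x - a * t) (x + b * t)) :
    (Vval a b x t u).toReal = Vglue a b x t u := by
  unfold Vval
  split_ifs with h
  · exact Vpos_toReal_eq ha hb ht h hu.1 hu.2
  · push Not at h
    rw [← Vglue_symm]
    exact Vpos_toReal_eq hb ha ht (by linarith) (by linarith [hu.2]) (by linarith [hu.1])

lemma contDiff_Vglue (a b x t : ℝ) : ContDiff ℝ 2 (Vglue a b x t) := by
  have h {f : ℝ → ℝ} (hf : ContDiff ℝ 2 f) : ContDiff ℝ 2 (fun u => max (f u) 0 ^ 3) :=
    contDiff_max_zero_cube.comp hf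
  have h1 : ContDiff ℝ 2 (fun u => corr a b x t u) := by unfold corr; fun_prop
  have h2 : ContDiff ℝ 2 (fun u => corr b a (-x) t (-u)) := by unfold corr; fun_prop
  have e1 := h h1
  have e2 := h h2
  have e3 := h contDiff_id
  have e4 := h contDiff_neg
  simp only [id] at e3
  unfold Vglue
  fun_prop

lemma hasDerivAt_Vglue {a b : ℝ} (ha : 0 < a) (hb : 0 < b) (x t u : ℝ) :
    HasDerivAt (Vglue a b x t) (VglueDeriv a b x t u) u := by
  have h {f : ℝ → ℝ} {f' : ℝ} (hf : HasDerivAt f f' u) :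
      HasDerivAt (fun u => max (f u) 0 ^ 3) (3 * max (f u) 0 ^ 2 * f') u := by
    have := (hasDerivAt_max_zero_pow 1 (f u)).comp u hf
    norm_num at this
    exact this
  have h1 : HasDerivAt (fun u => corr a b x t u) (a * 1 / (a + b)) u :=
    ((((hasDerivAt_id u).const_mul a).add_const _).sub_const _).div_const _
  have h2 : HasDerivAt (fun u => corr b a (-x) t (-u)) (b * -1 / (b + a)) u :=
    ((((hasDerivAt_id u).neg.const_mul b).add_const _).sub_const _).div_const _
  have key := ((((((h (hasDerivAt_id u)).div_const (6 * b)).add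
    ((h (hasDerivAt_id u).neg).div_const (6 * a))).add_const
    (max x 0 ^ 3 / (6 * a) + max (-x) 0 ^ 3 / (6 * b))).sub
    ((h h1).const_mul (1 / (6 * a) + 1 / (6 * b)))).sub
    ((h h2).const_mul (1 / (6 * a) + 1 / (6 * b))))
  refine key.congr_deriv ?_
  simp only [VglueDeriv, id, Pi.neg_apply]
  generalize max (corr a b x t u) 0 = p
  generalize max (corr b a (-x) t (-u)) 0 = q
  have hab : a + b ≠ 0 := by positivity
  rw [add_comm b a]
  field_simp
  ring

/-- The left end of the interval enters only through `x - a t ≤ u`, which forces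
`corr a b x t u ≤ u`. -/
lemma posPart_sq_sub_mono {a b x t u v : ℝ} (ha : 0 < a) (hb : 0 < b)
    (hu : x - a * t ≤ u) (huv : u < v) :
    max u 0 ^ 2 - max (corr a b x t u) 0 ^ 2 ≤ max v 0 ^ 2 - max (corr a b x t v) 0 ^ 2 ∧
    (0 < v →
      max u 0 ^ 2 - max (corr a b x t u) 0 ^ 2 < max v 0 ^ 2 - max (corr a b x t v) 0 ^ 2) := by
  have hab : 0 < a + b := by positivity
  have hle {z : ℝ} (hz : x - a * t ≤ z) : corr a b x t z ≤ z := by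
    rw [corr, div_le_iff₀ hab]
    nlinarith
  have hwu := hle hu
  have hwv := hle (hu.trans huv.le)
  have hinc : corr a b x t u < corr a b x t v := by
    unfold corr; gcongr
  have hslope : corr a b x t v - corr a b x t u < v - u := by
    have : corr a b x t v - corr a b x t u = a * (v - u) / (a + b) := by
      unfold corr; ring
    rw [this, div_lt_iff₀ hab]
    nlinarith
  generalize corr a b x t u = p at *
  generalize corr a b x t v = q at *
  have hstrict : 0 < v → max u 0 ^ 2 - max p 0 ^ 2 < max v 0 ^ 2 - max q 0 ^ 2 := by
    intro hv
    rw [max_eq_left hv.le]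
    rcases le_total u 0 with h | h
    · rw [max_eq_right h, max_eq_right (hwu.trans h)]
      rcases le_total q 0 with h' | h'
      · rw [max_eq_right h']; nlinarith
      · rw [max_eq_left h']
        have : q < v := by linarith
        nlinarith
    · rw [max_eq_left h]
      rcases le_total q 0 with h' | h'
      · rw [max_eq_right h', max_eq_right (hinc.le.trans h')]; nlinarith
      · rw [max_eq_left h']
        rcases le_total p 0 with h'' | h''
        · rw [max_eq_right h'']
          nlinarith
        · rw [max_eq_left h'']; nlinarith
  refine ⟨?_, hstrict⟩
  rcases lt_or_ge 0 v with hv | hv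
  · exact (hstrict hv).le
  · rw [max_eq_right hv, max_eq_right (huv.le.trans hv), max_eq_right (hwv.trans hv),
      max_eq_right (hwu.trans (huv.le.trans hv))]

lemma strictMonoOn_VglueDeriv {a b : ℝ} (ha : 0 < a) (hb : 0 < b) (x t : ℝ) :
    StrictMonoOn (VglueDeriv a b x t) (Icc (x - a * t) (x + b * t)) := by
  intro u hu v hv huv
  obtain ⟨h1, h1'⟩ := posPart_sq_sub_mono ha hb hu.1 huv
  obtain ⟨h2, h2'⟩ := posPart_sq_sub_mono (x := -x) (t := t) (u := -v) (v := -u) hb ha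
    (by linarith [hv.2]) (neg_lt_neg huv)
  unfold VglueDeriv
  have hb2 : 0 < 2 * b := by positivity
  have ha2 : 0 < 2 * a := by positivity
  rcases lt_or_ge 0 v with h | h
  · have e1 := div_lt_div_of_pos_right (h1' h) hb2
    have e2 := div_le_div_of_nonneg_right h2 ha2.le
    linarith
  · have e1 := div_le_div_of_nonneg_right h1 hb2.le
    have e2 := div_lt_div_of_pos_right (h2' (by linarith)) ha2
    linarith

/-- for positive `a, b` and `t > 0`, the function `u ↦ V(x,t;u,a,b)` is
strictly convex and twice continuously differentiable on `[x - a*t, x + b*t]`. -/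
theorem Vval_strictConvexOn_contDiffOn (a b x t : ℝ) (ha : 0 < a) (hb : 0 < b)
    (ht : 0 < t) :
    StrictConvexOn ℝ (Set.Icc (x - a * t) (x + b * t))
      (fun u => (Vval a b x t u).toReal) ∧
    ContDiffOn ℝ 2 (fun u => (Vval a b x t u).toReal)
      (Set.Icc (x - a * t) (x + b * t)) := by
  have heq : EqOn (Vglue a b x t) (fun u => (Vval a b x t u).toReal)
      (Icc (x - a * t) (x + b * t)) := fun u hu => (Vval_toReal_eq ha hb ht hu).symm
  have hd : deriv (Vglue a b x t) = VglueDeriv a b x t :=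
    funext fun u => (hasDerivAt_Vglue ha hb x t u).deriv
  have hc := contDiff_Vglue a b x t
  refine ⟨StrictConvexOn.congr ?_ heq, hc.contDiffOn.congr fun u hu => (heq hu).symm⟩
  refine StrictMonoOn.strictConvexOn_of_deriv (convex_Icc _ _) hc.continuous.continuousOn ?_
  rw [hd]
  exact (strictMonoOn_VglueDeriv ha hb x t).mono interior_subset

end
end

section
/- Let a, b, t be positive reals, x a real, r ∈ {1,2,3}, and let u, u' be nonnegative reals such that both (x,t,u) and (x,t,u') lie in the closure of the set Ωᵣ. Then sup over s ∈ [0,t] of |γ(s; x,t,u,a,b) − γ(s; x,t,u',a,b)| ≤ |u − u'|. -/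
/-!
In each region the piecewise trajectory, written with `max` and `min`, depends on `u` only
via the descending line `u - b * s`:
* on Ω₁ it is `max (u - b * s) (a * (s - t) + x)`;
* on the closure of Ω₂ it is `max (max (u - b * s) 0) (a * (s - t) + x)`;
* on the closure of Ω₃ it is `max (u - b * s) 0 + min 0 (-b * (s - t) + x)`.

Since `p ↦ max p c` is nonexpansive (`abs_max_sub_max_le_abs`), each of these is `1`-Lipschitz in `u`.
The formulas for Ω₂ and Ω₃ require the two breakpoints to be ordered, a nonstrict inequality that
passes to the closure.
-/

open Set MeasureTheory Matrix
open scoped Classical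

noncomputable section

/-- The set Ωᵣ as a subset of `ℝ × ℝ × ℝ` (coordinates `(x, t, u)`). -/
def omegaSet (a b : ℝ) (r : ℕ) : Set (ℝ × ℝ × ℝ) :=
  if r = 1 then {p | inOmega1 a b p.1 p.2.1 p.2.2}
  else if r = 2 then {p | inOmega2 a b p.1 p.2.1 p.2.2}
  else {p | inOmega3 a b p.1 p.2.1 p.2.2}

/-- The trajectory given by the piecewise formula of the `r`-th region (these formulas
extend by continuity to the closure of each region). -/
def gammaReg (r : ℕ) (a b x t u s : ℝ) : ℝ :=
  if r = 1 then gamma1 a b x t u s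
  else if r = 2 then gamma2 a b x t u s
  else gamma3 a b x t u s

/-- The first-region trajectory is the upper envelope of
the descending line from `u` and the ascending line into `x`; no membership condition is needed. -/
lemma gamma1_eq_max {a b : ℝ} (ha : 0 < a) (hb : 0 < b) (x t u s : ℝ) :
    gamma1 a b x t u s = max (u - b * s) (a * (s - t) + x) := by
  have hab : 0 < a + b := add_pos ha hb
  unfold gamma1
  split_ifs with h
  · rw [lt_div_iff₀ hab] at h
    exact (max_eq_left (by linarith)).symm
  · rw [not_lt, div_le_iff₀ hab] at h
    exact (max_eq_right (by linarith)).symm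

lemma gamma2_eq_max {a b x t u : ℝ} (ha : 0 < a) (hb : 0 < b) (h : u / b ≤ t - x / a) (s : ℝ) :
    gamma2 a b x t u s = max (max (u - b * s) 0) (a * (s - t) + x) := by
  have hx : a * (t - x / a) = a * t - x := by field_simp
  have hub : b * (u / b) = u := by field_simp
  unfold gamma2
  split_ifs with h1 h2
  · have e1 := mul_lt_mul_of_pos_left h1 hb
    have e2 := mul_lt_mul_of_pos_left (h1.trans_le h) ha
    rw [max_eq_left (by linarith : (0 : ℝ) ≤ u - b * s), max_eq_left (by linarith)]
  · have e1 := mul_le_mul_of_nonneg_left (not_lt.mp h1) hb.le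
    have e2 := mul_lt_mul_of_pos_left h2 ha
    rw [max_eq_right (by linarith : u - b * s ≤ 0), max_eq_left (by linarith)]
  · have e1 := mul_le_mul_of_nonneg_left (not_lt.mp h1) hb.le
    have e2 := mul_le_mul_of_nonneg_left (not_lt.mp h2) ha.le
    rw [max_eq_right (by linarith : u - b * s ≤ 0), max_eq_right (by linarith)]

/-- The third-region trajectory splits into the descent from `u` to `0`, which carries all the
dependence on `u`, and the descent from `0` to `x`. -/
lemma gamma3_eq_max_add_min {a b x t u : ℝ} (hb : 0 < b) (hx : x ≤ 0) (h : u - b * t ≤ x)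
    (s : ℝ) :
    gamma3 a b x t u s = max (u - b * s) 0 + min 0 (-b * (s - t) + x) := by
  have hxb : b * (t - |x| / b) = b * t + x := by
    rw [abs_of_nonpos hx]; field_simp; ring
  have hub : b * (u / b) = u := by field_simp
  unfold gamma3
  split_ifs with h1 h2
  · have e1 := mul_lt_mul_of_pos_left h1 hb
    rw [max_eq_left (by linarith), min_eq_left (by linarith), add_zero]
  · have e1 := mul_le_mul_of_nonneg_left (not_lt.mp h1) hb.le
    have e2 := mul_lt_mul_of_pos_left h2 hb
    rw [max_eq_right (by linarith), min_eq_left (by linarith), add_zero]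
  · have e1 := mul_le_mul_of_nonneg_left (not_lt.mp h1) hb.le
    have e2 := mul_le_mul_of_nonneg_left (not_lt.mp h2) hb.le
    rw [max_eq_right (by linarith), min_eq_right (by linarith), zero_add]

/-- On the closure of Ω₂, the descent from `u` reaches `0` no later than the ascent to `x` starts. -/
lemma div_le_of_mem_closure_omega2 {a b x t u : ℝ} (ha : 0 < a)
    (h : (x, t, u) ∈ closure (omegaSet a b 2)) : u / b ≤ t - x / a := by
  have hc : IsClosed {p : ℝ × ℝ × ℝ | p.2.2 / b ≤ p.2.1 - p.1 / a} :=
    isClosed_le (by fun_prop) (by fun_prop)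
  refine closure_minimal ?_ hc h
  intro p hp
  simp only [omegaSet, inOmega2, OfNat.ofNat_ne_one, if_true, if_false, mem_ofPred_eq] at hp ⊢
  obtain ⟨-, -, -, -, h5⟩ := hp
  rw [le_sub_iff_add_le, ← le_sub_iff_add_le', div_le_iff₀ ha]
  have e : (p.2.1 - p.2.2 / b) * a = a * p.2.1 - a * p.2.2 / b := by ring
  linarith

lemma le_of_mem_closure_omega3 {a b x t u : ℝ}
    (h : (x, t, u) ∈ closure (omegaSet a b 3)) : x ≤ 0 ∧ u - b * t ≤ x := by
  have hc : IsClosed ({p : ℝ × ℝ × ℝ | p.1 ≤ 0} ∩ {p : ℝ × ℝ × ℝ | p.2.2 - b * p.2.1 ≤ p.1}) :=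
    (isClosed_le (by fun_prop) (by fun_prop)).inter (isClosed_le (by fun_prop) (by fun_prop))
  refine closure_minimal ?_ hc h
  intro p hp
  simp only [omegaSet, inOmega3, OfNat.ofNat_ne_one, Nat.reduceEqDiff, if_false,
    mem_inter_iff, mem_ofPred_eq] at hp ⊢
  exact ⟨hp.2.2.2.2.le, hp.2.2.2.1⟩

/-- for positive `a, b, t`, `r ∈ {1,2,3}`, and nonnegative `u, u'` with
`(x,t,u)` and `(x,t,u')` in the closure of `Ωᵣ`, the trajectories satisfy
`sup_{s ∈ [0,t]} |γ(s;x,t,u,a,b) - γ(s;x,t,u',a,b)| ≤ |u - u'|`. -/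
theorem gamma_lipschitz_in_u (a b t x u u' : ℝ) (ha : 0 < a) (hb : 0 < b) (ht : 0 < t)
    (hu : 0 ≤ u) (hu' : 0 ≤ u') (r : ℕ) (hr : r = 1 ∨ r = 2 ∨ r = 3)
    (hmem : (x, t, u) ∈ closure (omegaSet a b r))
    (hmem' : (x, t, u') ∈ closure (omegaSet a b r)) :
    ∀ s ∈ Set.Icc 0 t,
      |gammaReg r a b x t u s - gammaReg r a b x t u' s| ≤ |u - u'| := by
  intro s _
  have hline : (u - b * s) - (u' - b * s) = u - u' := by ring
  rcases hr with rfl | rfl | rfl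
  · simp only [gammaReg, if_true, gamma1_eq_max ha hb]
    exact (abs_max_sub_max_le_abs _ _ _).trans_eq (by rw [hline])
  · simp only [gammaReg, OfNat.ofNat_ne_one, if_true, if_false,
      gamma2_eq_max ha hb (div_le_of_mem_closure_omega2 ha hmem),
      gamma2_eq_max ha hb (div_le_of_mem_closure_omega2 ha hmem')]
    exact ((abs_max_sub_max_le_abs _ _ _).trans (abs_max_sub_max_le_abs _ _ _)).trans_eq
      (by rw [hline])
  · obtain ⟨hx, h⟩ := le_of_mem_closure_omega3 hmem
    obtain ⟨-, h'⟩ := le_of_mem_closure_omega3 hmem'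
    simp only [gammaReg, OfNat.ofNat_ne_one, Nat.reduceEqDiff, if_false,
      gamma3_eq_max_add_min hb hx h, gamma3_eq_max_add_min hb hx h', add_sub_add_right_eq_sub]
    exact (abs_max_sub_max_le_abs _ _ _).trans_eq (by rw [hline])

end
end

section
/- Let a, b be positive reals, x a real, and t > 0. Then the function u ↦ V(x,t; u,a,b) is Lipschitz continuous on the interval [x − at, x + bt]; that is, there exists a constant L ≥ 0 such that |V(x,t; u,a,b) − V(x,t; u',a,b)| ≤ L|u − u'| for all u, u' ∈ [x − at, x + bt]. -/
/-!
With `p⁺ = max p 0`, on the whole interval `[x - a t, x + b t]` the piecewise definition collapses to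

`V = (u⁺)³/(6b) + ((-u)⁺)³/(6a) + (x⁺)³/(6a) + ((-x)⁺)³/(6b) - c ((w⁺)³ + (v⁺)³)`,

where `c = 1/(6a) + 1/(6b)`, `w = (a u + b x - a b t)/(a + b)` and
`v = (-b u - a x - a b t)/(a + b)` is the reflection of `w` under
`(a, b, x, u) ↦ (b, a, -x, -u)`. Indeed, for `u ≥ 0` the sign of `w` decides between Ω₁ and its
complement, and `v ≤ 0`; the case `u < 0` follows by reflection (`Vpos_toReal`, `Vval_toReal`).
As a function of `u` this is a constant plus a linear combination of functions `((p u + q)⁺)³`,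
each of which is Lipschitz on bounded intervals (`posCube_lipschitz`).
-/

open Set MeasureTheory Matrix
open scoped Classical

noncomputable section

lemma posCube_sub_le {M s s' : ℝ} (hs : |s| ≤ M) (hs' : |s'| ≤ M) :
    |max s 0 ^ 3 - max s' 0 ^ 3| ≤ 3 * M ^ 2 * |s - s'| := by
  have hM : 0 ≤ M := (abs_nonneg s).trans hs
  have h1 : 0 ≤ max s 0 := le_max_right _ _
  have h2 : 0 ≤ max s' 0 := le_max_right _ _
  have h3 : max s 0 ≤ M := max_le ((le_abs_self s).trans hs) hM
  have h4 : max s' 0 ≤ M := max_le ((le_abs_self s').trans hs') hM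
  have h5 : |max s 0 - max s' 0| ≤ |s - s'| := abs_max_sub_max_le_abs s s' 0
  have e : max s 0 ^ 3 - max s' 0 ^ 3 =
      (max s 0 ^ 2 + max s 0 * max s' 0 + max s' 0 ^ 2) * (max s 0 - max s' 0) := by ring
  rw [e, abs_mul, abs_of_nonneg (by positivity)]
  have h6 : max s 0 ^ 2 + max s 0 * max s' 0 + max s' 0 ^ 2 ≤ 3 * M ^ 2 := by nlinarith
  gcongr

lemma posCube_lipschitz (p q A B : ℝ) :
    ∃ L : ℝ, 0 ≤ L ∧ ∀ u ∈ Set.Icc A B, ∀ u' ∈ Set.Icc A B,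
      |max (p * u + q) 0 ^ 3 - max (p * u' + q) 0 ^ 3| ≤ L * |u - u'| := by
  have bd : ∀ u ∈ Set.Icc A B, |p * u + q| ≤ |p| * max |A| |B| + |q| := fun u hu =>
    (abs_add_le _ _).trans (by
      rw [abs_mul]
      gcongr
      exact abs_le_max_abs_abs hu.1 hu.2)
  refine ⟨3 * (|p| * max |A| |B| + |q|) ^ 2 * |p|, by positivity, fun u hu u' hu' => ?_⟩
  refine (posCube_sub_le (bd u hu) (bd u' hu')).trans_eq ?_
  rw [show p * u + q - (p * u' + q) = p * (u - u') by ring, abs_mul]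
  ring

/-- Closed form of `V` for `u ≥ 0`: every point satisfying the reachability constraints lies in
Ω₁, Ω₂ or Ω₃, and the correction term is active exactly where `a u + b x - a b t > 0`. -/
lemma Vpos_toReal {a b x t u : ℝ} (ha : 0 < a) (hb : 0 < b) (ht : 0 < t) (hu : 0 ≤ u)
    (h1 : x - a * t ≤ u) (h2 : u ≤ x + b * t) :
    (Vpos a b x t u).toReal = u ^ 3 / (6 * b) + max x 0 ^ 3 / (6 * a) + max (-x) 0 ^ 3 / (6 * b)
      - (1 / (6 * a) + 1 / (6 * b)) * max ((a * u + b * x - a * b * t) / (a + b)) 0 ^ 3 := by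
  have hab : 0 < a + b := by linarith
  have hdiv : u / b ≤ t ↔ u ≤ t * b := div_le_iff₀ hb
  have hline : a * t - a * u / b ≤ x ↔ 0 ≤ a * u + b * x - a * b * t := by
    rw [sub_le_iff_le_add, ← sub_le_iff_le_add', le_div_iff₀ hb]
    constructor <;> intro h <;> linarith
  by_cases hw : 0 ≤ a * u + b * x - a * b * t
  · have hx : 0 ≤ x := by
      by_contra! hx
      nlinarith
    have hO : inOmega1 a b x t u := by
      refine ⟨hu, ht.le, ?_⟩
      by_cases h : u / b ≤ t
      · exact Or.inr ⟨h, hline.2 hw, by linarith⟩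
      · exact Or.inl ⟨not_le.1 h, by linarith, by linarith⟩
    rw [Vpos, if_pos hO, EReal.toReal_coe, V1fun, max_eq_left hx,
      max_eq_right (neg_nonpos.2 hx), max_eq_left (div_nonneg hw hab.le)]
    ring
  · have hbt : u ≤ t * b := by
      by_contra! h
      nlinarith
    have hO : ¬ inOmega1 a b x t u := by
      rintro ⟨-, -, h | h⟩
      · exact absurd (hdiv.2 hbt) (not_le.2 h.1)
      · exact hw (hline.1 h.2.1)
    have hm : max ((a * u + b * x - a * b * t) / (a + b)) 0 = 0 :=
      max_eq_right (div_nonpos_of_nonpos_of_nonneg (not_le.1 hw).le hab.le)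
    rw [Vpos, if_neg hO, hm]
    rcases le_or_gt 0 x with hx | hx
    · rw [if_pos ⟨hu, ht.le, hdiv.2 hbt, hx, not_le.1 (mt hline.1 hw)⟩, EReal.toReal_coe, V2fun,
        max_eq_left hx, max_eq_right (neg_nonpos.2 hx)]
      ring
    · rw [if_neg fun h => absurd h.2.2.2.1 (not_le.2 hx),
        if_pos ⟨hu, ht.le, hdiv.2 hbt, by linarith, hx⟩, EReal.toReal_coe, V3fun,
        max_eq_right hx.le, max_eq_left (neg_nonneg.2 hx.le)]
      ring

/-- Closed form of `V` on the whole interval `[x - a t, x + b t]`. The arguments are written in the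
form `p * u + q` needed for `posCube_lipschitz`. -/
lemma Vval_toReal {a b x t u : ℝ} (ha : 0 < a) (hb : 0 < b) (ht : 0 < t)
    (h1 : x - a * t ≤ u) (h2 : u ≤ x + b * t) :
    (Vval a b x t u).toReal =
      1 / (6 * b) * max (1 * u + 0) 0 ^ 3 + 1 / (6 * a) * max (-1 * u + 0) 0 ^ 3
      + (max x 0 ^ 3 / (6 * a) + max (-x) 0 ^ 3 / (6 * b))
      - (1 / (6 * a) + 1 / (6 * b)) *
        (max (a / (a + b) * u + (b * x - a * b * t) / (a + b)) 0 ^ 3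
          + max (-b / (a + b) * u + (-a * x - a * b * t) / (a + b)) 0 ^ 3) := by
  have hab : 0 < a + b := by linarith
  have e1 : a / (a + b) * u + (b * x - a * b * t) / (a + b)
      = (a * u + b * x - a * b * t) / (a + b) := by ring
  have e2 : -b / (a + b) * u + (-a * x - a * b * t) / (a + b)
      = (-(b * u) - a * x - a * b * t) / (a + b) := by ring
  rw [e1, e2, one_mul, neg_one_mul, add_zero, add_zero, Vval]
  by_cases hu : 0 ≤ u
  · -- Here `x ≥ u - b t ≥ -b t`, so the reflected correction term vanishes.
    have hm : max ((-(b * u) - a * x - a * b * t) / (a + b)) 0 = 0 :=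
      max_eq_right (div_nonpos_of_nonpos_of_nonneg (by nlinarith) hab.le)
    rw [if_pos hu, Vpos_toReal ha hb ht hu h1 h2, hm, max_eq_left hu,
      max_eq_right (neg_nonpos.2 hu)]
    ring
  · have hu' : u ≤ 0 := (not_le.1 hu).le
    -- Here `x ≤ u + a t ≤ a t`, so the unreflected correction term vanishes.
    have hm : max ((a * u + b * x - a * b * t) / (a + b)) 0 = 0 :=
      max_eq_right (div_nonpos_of_nonpos_of_nonneg (by nlinarith) hab.le)
    have e3 : (b * -u + a * -x - b * a * t) / (b + a)
        = (-(b * u) - a * x - a * b * t) / (a + b) := by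
      rw [add_comm b a]; ring
    rw [if_neg hu, Vpos_toReal hb ha ht (neg_nonneg.2 hu') (by linarith) (by linarith), hm, e3,
      neg_neg, max_eq_right hu', max_eq_left (neg_nonneg.2 hu')]
    ring

/-- for positive `a, b` and `t > 0`, the function `u ↦ V(x,t;u,a,b)` is
Lipschitz continuous on `[x - a*t, x + b*t]`. -/
theorem Vval_lipschitzOn (a b x t : ℝ) (ha : 0 < a) (hb : 0 < b) (ht : 0 < t) :
    ∃ L : ℝ, 0 ≤ L ∧
      ∀ u ∈ Set.Icc (x - a * t) (x + b * t), ∀ u' ∈ Set.Icc (x - a * t) (x + b * t),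
        |(Vval a b x t u).toReal - (Vval a b x t u').toReal| ≤ L * |u - u'| := by
  obtain ⟨L₁, p₁, H₁⟩ := posCube_lipschitz 1 0 (x - a * t) (x + b * t)
  obtain ⟨L₂, p₂, H₂⟩ := posCube_lipschitz (-1) 0 (x - a * t) (x + b * t)
  obtain ⟨L₃, p₃, H₃⟩ := posCube_lipschitz (a / (a + b)) ((b * x - a * b * t) / (a + b))
    (x - a * t) (x + b * t)
  obtain ⟨L₄, p₄, H₄⟩ := posCube_lipschitz (-b / (a + b)) ((-a * x - a * b * t) / (a + b))
    (x - a * t) (x + b * t)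
  refine ⟨1 / (6 * b) * L₁ + 1 / (6 * a) * L₂ + (1 / (6 * a) + 1 / (6 * b)) * (L₃ + L₄),
    by positivity, fun u hu u' hu' => ?_⟩
  rw [Vval_toReal ha hb ht hu.1 hu.2, Vval_toReal ha hb ht hu'.1 hu'.2]
  have k₁ := H₁ u hu u' hu'
  have k₂ := H₂ u hu u' hu'
  have k₃ := H₃ u hu u' hu'
  have k₄ := H₄ u hu u' hu'
  have hα : 0 ≤ 1 / (6 * a) := by positivity
  have hβ : 0 ≤ 1 / (6 * b) := by positivity
  generalize 1 / (6 * a) = α at *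
  generalize 1 / (6 * b) = β at *
  rw [abs_le] at *
  constructor
  · linarith [mul_le_mul_of_nonneg_left k₁.1 hβ, mul_le_mul_of_nonneg_left k₂.1 hα,
      mul_le_mul_of_nonneg_left k₃.2 (add_nonneg hα hβ),
      mul_le_mul_of_nonneg_left k₄.2 (add_nonneg hα hβ)]
  · linarith [mul_le_mul_of_nonneg_left k₁.2 hβ, mul_le_mul_of_nonneg_left k₂.2 hα,
      mul_le_mul_of_nonneg_left k₃.1 (add_nonneg hα hβ),
      mul_le_mul_of_nonneg_left k₄.1 (add_nonneg hα hβ)]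

end
end
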